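/- arXiv:2503.07281 — 2 statements merged into one kernel-verified Lean document; each statement's English description precedes it below -/
import Mathlib

section
/- Let τ > 0 and let 𝒮_{0,τ} be the set of Schwartz functions φ : ℝ → ℂ such that φ̂(ξ) = 0 for all ξ < 0, ∫_ℝ φ(x)·x^k dx = 0 for every integer k ≥ 0, and ∫_ℝ φ(x)·x^k·e^{−iτx} dx = 0 for every integer k ≥ 0. Then 𝒮_{0,τ} is dense, with respect to the L¹ norm, in H¹_{{τ}} := {f ∈ H¹₊ : f̂(τ) = 0}: for every f ∈ H¹₊ with f̂(τ) = 0 and every ε > 0 there exists φ ∈ 𝒮_{0,τ} with ‖f − φ‖_{L¹} < ε. -/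
/-!
Two facts about `L¹` carry the proof. First, points are sets of spectral synthesis: if `𝓕 f b = 0`,
the part of `f` with frequencies very close to `b` is small in `L¹`. Since `f` has no negative
frequencies, continuity gives `𝓕 f 0 = 0`, so this applies at `b = 0` and at `b = τ`
(`τ / (2π)` in the normalisation of `𝓕`). Together with an
approximate identity it yields a smooth, compactly supported multiplier `m`, vanishing near both
points, with `f * 𝓕⁻ m` close to `f` in `L¹` (`exists_multiplier`). Both the smallness and the
approximate identity property come from the single limit `tendsto_dilated_convolution`.

Second, `f` is multiplied by a slowly varying Schwartz cutoff `c ψ(s x)` whose Fourier transform is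
supported in `[-2s, 2s]`. The result `F` is `L¹`-close to `f`, has a smooth Fourier transform, and its
frequencies lie in `[-2s, ∞)`. Hence `𝓕 F · m` is smooth and compactly supported, vanishes near `0`
and `τ`, and vanishes on the negative half-line because `m` already kills `[-2s, 0]`. Its inverse
Fourier transform `F * 𝓕⁻ m` is the required Schwartz function: vanishing of its Fourier transform
near a point makes all moments at that frequency vanish (`moment_eq_zero`), and Young's inequality
bounds its distance to `f * 𝓕⁻ m`.
-/

open MeasureTheory Complex ComplexConjugate

/-- The Fourier transform of an integrable function `f : ℝ → ℂ`:
`f̂(ξ) = ∫ f(x) e^{-iξx} dx`. -/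
noncomputable def FT (f : ℝ → ℂ) (ξ : ℝ) : ℂ :=
  ∫ x : ℝ, f x * Complex.exp (-Complex.I * ξ * x)

open scoped FourierTransform ENNReal Topology ContDiff SchwartzMap
open Filter

/-- `FT` is Mathlib's Fourier transform up to rescaling the frequency by `2π`. -/
lemma FT_eq_fourier (f : ℝ → ℂ) (ξ : ℝ) : FT f ξ = 𝓕 f (ξ / (2 * Real.pi)) := by
  rw [Real.fourier_real_eq_integral_exp_smul, FT]
  congr 1
  ext x
  rw [smul_eq_mul, mul_comm]
  congr 2
  push_cast
  have : (Real.pi : ℂ) ≠ 0 := by exact_mod_cast Real.pi_ne_zero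
  field_simp

/-! ### Translation estimates in `L¹` -/

/-- Translations act continuously on `L¹`, at the identity. -/
lemma tendsto_translation {h : ℝ → ℂ} (hi : Integrable h) :
    Tendsto (fun s : ℝ => ∫⁻ x, ‖h (x - s) - h x‖ₑ) (𝓝 0) (𝓝 0) := by
  let g : ℝ → C(ℝ, ℝ) := fun s => ⟨fun x => x - s, by fun_prop⟩
  have hg : Continuous g := by
    let G : C(ℝ × ℝ, ℝ) := ⟨fun p => p.2 - p.1, by fun_prop⟩
    exact G.curry.continuous
  have hmp : ∀ s, MeasurePreserving (g s) volume volume := fun s =>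
    measurePreserving_sub_right volume s
  let F : Lp ℂ 1 (volume : Measure ℝ) := hi.toL1 h
  have key := Tendsto.compMeasurePreservingLp (f := fun _ : ℝ => F) (f₀ := F)
    tendsto_const_nhds (hg.tendsto 0) hmp (hmp 0) (by simp)
  rw [tendsto_iff_edist_tendsto_0] at key
  refine key.congr fun s => ?_
  rw [Lp.edist_def, eLpNorm_one_eq_lintegral_enorm]
  apply lintegral_congr_ae
  have e0 : (F : ℝ → ℂ) =ᵐ[volume] h := hi.coeFn_toL1
  have e1 := Lp.coeFn_compMeasurePreserving F (hmp s)
  have e2 := Lp.coeFn_compMeasurePreserving F (hmp 0)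
  have e3 := (hmp s).quasiMeasurePreserving.ae_eq_comp e0
  have e4 := (hmp 0).quasiMeasurePreserving.ae_eq_comp e0
  filter_upwards [e1, e2, e3, e4] with x h1 h2 h3 h4
  simp only [Pi.sub_apply]
  rw [h1, h2, h3, h4]
  simp [g]

/-- If the translates of `h` in `∫ g(y) h(x - s y) dy` are shrunk to `h` itself, the integral tends to
`(∫ g) h` in `L¹`. With `∫ g = 1` this is the approximate identity property (`g` is the kernel); with
`∫ g = 0` it says that convolving `g` with a very spread out kernel (`h` rescaled) gives something
small. -/
lemma tendsto_dilated_convolution {g h : ℝ → ℂ} (hg : Integrable g) (hh : Integrable h)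
    (hgm : Measurable g) (hhm : Measurable h) :
    Tendsto (fun s : ℝ => ∫⁻ x, ‖(∫ y, g y * h (x - s * y)) - (∫ y, g y) * h x‖ₑ)
      (𝓝 0) (𝓝 0) := by
  have bound : ∀ s : ℝ, ∫⁻ x, ‖(∫ y, g y * h (x - s * y)) - (∫ y, g y) * h x‖ₑ ≤
      ∫⁻ y, ‖g y‖ₑ * ∫⁻ x, ‖h (x - s * y) - h x‖ₑ := by
    intro s
    -- Tonelli: the integrals over `y` converge absolutely for almost every `x`.
    have hfin : ∫⁻ x, ∫⁻ y, ‖g y‖ₑ * ‖h (x - s * y)‖ₑ ≠ (⊤ : ℝ≥0∞) := by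
      rw [lintegral_lintegral_swap (by fun_prop)]
      have : ∀ y, ∫⁻ x, ‖g y‖ₑ * ‖h (x - s * y)‖ₑ = ‖g y‖ₑ * ∫⁻ x, ‖h x‖ₑ := fun y => by
        rw [lintegral_const_mul _ (by fun_prop),
          lintegral_sub_right_eq_self (fun x => ‖h x‖ₑ) (s * y)]
      simp_rw [this]
      rw [lintegral_mul_const _ (by fun_prop)]
      exact ENNReal.mul_ne_top hg.2.ne hh.2.ne
    have hmeas : Measurable (fun p : ℝ × ℝ => ‖g p.2‖ₑ * ‖h (p.1 - s * p.2)‖ₑ) := by fun_prop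
    have hae := ae_lt_top hmeas.lintegral_prod_right' hfin
    calc ∫⁻ x, ‖(∫ y, g y * h (x - s * y)) - (∫ y, g y) * h x‖ₑ
        ≤ ∫⁻ x, ∫⁻ y, ‖g y‖ₑ * ‖h (x - s * y) - h x‖ₑ := by
          refine lintegral_mono_ae ?_
          filter_upwards [hae] with x hx
          have hgi : Integrable (fun y => g y * h (x - s * y)) :=
            ⟨by fun_prop, by simpa [HasFiniteIntegral] using hx⟩
          rw [← integral_mul_const, ← integral_sub hgi (hg.mul_const _)]
          refine (enorm_integral_le_lintegral_enorm _).trans (le_of_eq ?_)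
          simp_rw [← mul_sub, enorm_mul]
      _ = ∫⁻ y, ∫⁻ x, ‖g y‖ₑ * ‖h (x - s * y) - h x‖ₑ := by
          rw [lintegral_lintegral_swap]
          fun_prop
      _ = _ := by
          congr 1; ext y
          rw [lintegral_const_mul _ (by fun_prop)]
  have lim : Tendsto (fun s : ℝ => ∫⁻ y, ‖g y‖ₑ * ∫⁻ x, ‖h (x - s * y) - h x‖ₑ)
      (𝓝 0) (𝓝 (∫⁻ _ : ℝ, 0)) := by
    refine tendsto_lintegral_filter_of_dominated_convergence
      (fun y => ‖g y‖ₑ * (2 * ∫⁻ x, ‖h x‖ₑ)) (.of_forall fun s => ?_)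
      (.of_forall fun s => .of_forall fun y => ?_) ?_ (.of_forall fun y => ?_)
    · have : Measurable (fun p : ℝ × ℝ => ‖h (p.2 - s * p.1) - h p.2‖ₑ) := by fun_prop
      exact hgm.enorm.mul this.lintegral_prod_right'
    · gcongr
      calc ∫⁻ x, ‖h (x - s * y) - h x‖ₑ
          ≤ ∫⁻ x, (‖h (x - s * y)‖ₑ + ‖h x‖ₑ) := lintegral_mono fun x => enorm_sub_le
        _ = _ := by
          rw [lintegral_add_left (by fun_prop),
            lintegral_sub_right_eq_self (fun x => ‖h x‖ₑ) (s * y), two_mul]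
    · rw [lintegral_mul_const _ (by fun_prop)]
      exact ENNReal.mul_ne_top hg.2.ne (ENNReal.mul_ne_top (by simp) hh.2.ne)
    · have h1 : Tendsto (fun s : ℝ => s * y) (𝓝 0) (𝓝 0) := by
        have : Continuous (fun s : ℝ => s * y) := by fun_prop
        simpa using this.tendsto 0
      have := ENNReal.Tendsto.const_mul (a := ‖g y‖ₑ) ((tendsto_translation hh).comp h1)
        (Or.inr enorm_ne_top)
      simpa using this
  rw [lintegral_zero] at lim
  exact tendsto_of_tendsto_of_tendsto_of_le_of_le tendsto_const_nhds lim
    (fun _ => zero_le) bound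

/-- Young's inequality `‖F * M‖₁ ≤ ‖F‖₁ ‖M‖₁`. -/
lemma lintegral_convolution_le {F M : ℝ → ℂ} (hF : Measurable F) (hM : Measurable M) :
    ∫⁻ x, ‖∫ y, F y * M (x - y)‖ₑ ≤ (∫⁻ y, ‖F y‖ₑ) * ∫⁻ x, ‖M x‖ₑ := by
  calc ∫⁻ x, ‖∫ y, F y * M (x - y)‖ₑ ≤ ∫⁻ x, ∫⁻ y, ‖F y‖ₑ * ‖M (x - y)‖ₑ := by
        refine lintegral_mono fun x => (enorm_integral_le_lintegral_enorm _).trans ?_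
        simp
    _ = ∫⁻ y, ∫⁻ x, ‖F y‖ₑ * ‖M (x - y)‖ₑ := by
        rw [lintegral_lintegral_swap]
        fun_prop
    _ = _ := by
        rw [← lintegral_mul_const _ (by fun_prop)]
        congr 1; ext y
        rw [lintegral_const_mul _ (by fun_prop), lintegral_sub_right_eq_self (fun x => ‖M x‖ₑ) y]

lemma measurable_convolution {F M : ℝ → ℂ} (hF : Measurable F) (hM : Measurable M) :
    Measurable (fun x => ∫ y, F y * M (x - y)) := by
  have : StronglyMeasurable (fun p : ℝ × ℝ => F p.2 * M (p.1 - p.2)) :=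
    Measurable.stronglyMeasurable (by fun_prop)
  exact this.integral_prod_right'.measurable

/-! ### Localised Fourier multipliers -/

lemma fourierInv_dilate (κ : ℝ → ℂ) {a : ℝ} (ha : 0 < a) (b x : ℝ) :
    𝓕⁻ (fun ξ => κ (a * (ξ - b))) x =
      cexp (2 * Real.pi * I * b * x) * ((a⁻¹ : ℝ) * 𝓕⁻ κ (a⁻¹ * x)) := by
  simp only [Real.fourierInv_eq', RCLike.inner_apply, conj_trivial, smul_eq_mul]
  have h1 := Measure.integral_comp_mul_left
    (fun η => cexp (↑(2 * Real.pi * (a⁻¹ * x * η)) * I) * κ η) a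
  have h2 := integral_sub_right_eq_self
    (fun ξ => cexp (↑(2 * Real.pi * (a⁻¹ * x * (a * ξ))) * I) * κ (a * ξ)) b (μ := volume)
  rw [← h2, abs_of_pos (inv_pos.2 ha)] at h1
  rw [← Complex.real_smul, ← h1, ← integral_const_mul]
  congr 1; ext ξ
  rw [← mul_assoc (cexp _) (cexp _), ← Complex.exp_add]
  congr 2
  push_cast
  have : (a : ℂ) ≠ 0 := by exact_mod_cast ha.ne'
  field_simp
  ring

/-- If `𝓕 f b = 0`, convolving `f` with the kernel whose Fourier transform is a bump concentrated
within distance `O(s)` of the frequency `b` tends to zero in `L¹` as `s → 0`. -/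
lemma tendsto_low_frequency {f K : ℝ → ℂ} (hf : Integrable f) (hK : Integrable K)
    (hfm : Measurable f) (hKm : Measurable K) {b : ℝ} (hb : 𝓕 f b = 0) :
    Tendsto (fun s : ℝ => ∫⁻ x, ‖∫ y, f y *
      (cexp (2 * Real.pi * I * b * (x - y : ℝ)) * (s * K (s * (x - y))))‖ₑ)
      (𝓝[>] 0) (𝓝 0) := by
  -- Modulating by `b` reduces to a function of integral zero.
  set g : ℝ → ℂ := fun y => cexp (↑(-2 * Real.pi * y * b) * I) * f y with hgdef
  have hgi : Integrable g := by
    refine hf.bdd_mul (c := 1) (by fun_prop) (.of_forall fun y => ?_)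
    rw [Complex.norm_exp_ofReal_mul_I]
  have hg0 : ∫ y, g y = 0 := by
    rw [← hb, Real.fourier_real_eq_integral_exp_smul]; rfl
  have lim := (tendsto_dilated_convolution hgi hK (by fun_prop) hKm).mono_left
    (nhdsWithin_le_nhds (s := Set.Ioi 0))
  refine lim.congr' ?_
  filter_upwards [self_mem_nhdsWithin] with s hs
  have hs : 0 < s := hs
  simp only [hg0, zero_mul, sub_zero]
  have hGm : Measurable (fun x => ‖∫ y, g y * K (x - s * y)‖ₑ) := by
    have : StronglyMeasurable (fun p : ℝ × ℝ => g p.2 * K (p.1 - s * p.2)) :=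
      Measurable.stronglyMeasurable (by fun_prop)
    exact this.integral_prod_right'.measurable.enorm
  have hscale : ∀ G : ℝ → ℝ≥0∞, Measurable G →
      ∫⁻ x, G x = ∫⁻ x, ENNReal.ofReal |s| * G (s * x) := fun G hG => by
    conv_lhs => rw [← Real.smul_map_volume_mul_left hs.ne']
    rw [lintegral_smul_measure, lintegral_map hG (by fun_prop), smul_eq_mul,
      ← lintegral_const_mul _ (by fun_prop)]
  -- The kernel `s K(s ·)` is spread out; the substitution `x ↦ s x` turns it into `K` with translates
  -- by `s y`.
  rw [hscale _ hGm]
  congr 1; ext x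
  rw [abs_of_pos hs, ← Real.enorm_of_nonneg hs.le]
  have : ∫ y, f y * (cexp (2 * Real.pi * I * b * (x - y : ℝ)) * (s * K (s * (x - y)))) =
      cexp (↑(2 * Real.pi * b * x) * I) * (s * ∫ y, g y * K (s * x - s * y)) := by
    rw [← integral_const_mul, ← integral_const_mul]
    congr 1; ext y
    have e : cexp (2 * Real.pi * I * b * (x - y : ℝ)) =
        cexp (↑(2 * Real.pi * b * x) * I) * cexp (↑(-2 * Real.pi * y * b) * I) := by
      rw [← Complex.exp_add]; congr 1; push_cast; ring
    rw [e, mul_sub, hgdef]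
    ring
  rw [this, enorm_mul, enorm_mul]
  have e1 : ‖cexp (↑(2 * Real.pi * b * x) * I)‖ₑ = 1 := by
    rw [← ofReal_norm, Complex.norm_exp_ofReal_mul_I]; simp
  have e2 : ‖(s : ℂ)‖ₑ = ‖s‖ₑ := by
    rw [← ofReal_norm, ← ofReal_norm]; simp
  rw [e1, e2, one_mul]

lemma tendsto_approximate_identity {f K : ℝ → ℂ} (hf : Integrable f) (hK : Integrable K)
    (hfm : Measurable f) (hKm : Measurable K) (h1 : ∫ y, K y = 1) :
    Tendsto (fun s : ℝ => ∫⁻ x, ‖(∫ y, f y * ((s⁻¹ : ℝ) * K (s⁻¹ * (x - y)))) - f x‖ₑ)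
      (𝓝[>] 0) (𝓝 0) := by
  have lim := (tendsto_dilated_convolution hK hf hKm hfm).mono_left
    (nhdsWithin_le_nhds (s := Set.Ioi 0))
  refine lim.congr' ?_
  filter_upwards [self_mem_nhdsWithin] with s hs
  have hs : 0 < s := hs
  rw [h1]
  congr 1; ext x
  rw [one_mul]
  congr 2
  have e1 := integral_sub_left_eq_self
    (fun z => K (s⁻¹ * z) * f (x - z)) volume x
  have e2 := Measure.integral_comp_mul_left (fun u => K u * f (x - s * u)) s⁻¹
  rw [inv_inv, abs_of_pos hs, Complex.real_smul] at e2
  have e3 : ∫ y, f y * ((s⁻¹ : ℝ) * K (s⁻¹ * (x - y))) =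
      (s⁻¹ : ℝ) * ∫ y, K (s⁻¹ * (x - y)) * f (x - (x - y)) := by
    rw [← integral_const_mul]
    congr 1; ext y
    rw [sub_sub_cancel]; ring
  rw [e3, e1]
  have e4 : ∀ z, s * (s⁻¹ * z) = z := fun z => by field_simp
  simp only [e4] at e2
  have : (s : ℂ) ≠ 0 := by exact_mod_cast hs.ne'
  rw [e2, ← mul_assoc]
  push_cast
  rw [inv_mul_cancel₀ this, one_mul]

/-- The multiplier `m` acts on `L¹` as convolution with `𝓕⁻ m`; this form makes no integrability demand
on `𝓕 F`. -/
lemma fourierInv_fourier_mul {F m : ℝ → ℂ} (hF : Integrable F) (hm : Integrable m) (x : ℝ) :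
    𝓕⁻ (fun ξ => 𝓕 F ξ * m ξ) x = ∫ y, F y * 𝓕⁻ m (x - y) := by
  have hG : Integrable (fun ξ => cexp (↑(2 * Real.pi * (x * ξ)) * I) * m ξ) := by
    refine hm.bdd_mul (c := 1) (by fun_prop) (.of_forall fun y => ?_)
    rw [Complex.norm_exp_ofReal_mul_I]
  have key : ∫ ξ, 𝓕 F ξ * (cexp (↑(2 * Real.pi * (x * ξ)) * I) * m ξ) =
      ∫ y, F y * 𝓕 (fun ξ => cexp (↑(2 * Real.pi * (x * ξ)) * I) * m ξ) y := by
    have := VectorFourier.integral_fourierIntegral_smul_eq_flip (L := innerₗ ℝ)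
      Real.continuous_fourierChar continuous_inner hF hG
    rw [flip_innerₗ] at this
    exact this
  simp only [Real.fourierInv_eq', RCLike.inner_apply, conj_trivial, smul_eq_mul]
  calc _ = ∫ ξ, 𝓕 F ξ * (cexp (↑(2 * Real.pi * (x * ξ)) * I) * m ξ) := by
        congr 1; ext ξ; ring
    _ = _ := key
    _ = _ := by
        congr 1; ext y
        rw [Real.fourier_real_eq_integral_exp_smul]
        congr 2; ext v
        rw [smul_eq_mul, ← mul_assoc, ← Complex.exp_add]
        congr 2
        push_cast; ring

/-- A Schwartz bump on the frequency side, equal to `1` on `[-1, 1]` and supported in `[-2, 2]`. -/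
lemma exists_bump : ∃ κ : 𝓢(ℝ, ℂ), (∀ ξ, |ξ| ≤ 1 → κ ξ = 1) ∧ (∀ ξ, 2 ≤ |ξ| → κ ξ = 0) ∧
    ∫ ξ, κ ξ ≠ 0 := by
  let β : ContDiffBump (0 : ℝ) := ⟨1, 2, one_pos, one_lt_two⟩
  have hc : HasCompactSupport (fun ξ => (β ξ : ℂ)) :=
    β.hasCompactSupport.comp_left (g := ((↑) : ℝ → ℂ)) Complex.ofReal_zero
  have hs : ContDiff ℝ ∞ (fun ξ => (β ξ : ℂ)) := Complex.ofRealCLM.contDiff.comp β.contDiff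
  refine ⟨hc.toSchwartzMap hs, fun ξ h => ?_, fun ξ h => ?_, ?_⟩
  · have := β.one_of_mem_closedBall (x := ξ) (by simpa [β] using h)
    simp [this]
  · have := β.zero_of_le_dist (x := ξ) (by simpa [β] using h)
    simp [this]
  · simp only [HasCompactSupport.toSchwartzMap_toFun, integral_complex_ofReal]
    exact_mod_cast (β.integral_pos (μ := volume)).ne'

lemma exists_dilate (κ : 𝓢(ℝ, ℂ)) (hκ : ∀ ξ, 2 ≤ |ξ| → κ ξ = 0) {a : ℝ} (ha : 0 < a) (b : ℝ) :
    ∃ m : 𝓢(ℝ, ℂ), HasCompactSupport m ∧ ∀ ξ, m ξ = κ (a * (ξ - b)) := by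
  have hc : HasCompactSupport (fun ξ => κ (a * (ξ - b))) := by
    refine HasCompactSupport.intro (isCompact_closedBall b (2 / a)) fun ξ hξ => hκ _ ?_
    rw [Metric.mem_closedBall, not_le, Real.dist_eq, div_lt_iff₀ ha] at hξ
    rw [abs_mul, abs_of_pos ha]
    linarith
  have hs : ContDiff ℝ ∞ (fun ξ => κ (a * (ξ - b))) := (κ.smooth ⊤).comp (by fun_prop)
  exact ⟨hc.toSchwartzMap hs, hc, fun ξ => rfl⟩

lemma integrable_mul_schwartz_sub {f : ℝ → ℂ} (hf : Integrable f) (M : 𝓢(ℝ, ℂ)) (x : ℝ) :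
    Integrable (fun y => f y * M (x - y)) := by
  refine hf.mul_bdd (c := SchwartzMap.seminorm ℝ 0 0 M) ?_
    (.of_forall fun y => SchwartzMap.norm_le_seminorm ℝ M _)
  exact (M.continuous.comp (by fun_prop)).aestronglyMeasurable

/-- A compactly supported multiplier vanishing near `0` and `T` which nevertheless moves `f` very
little in `L¹`: a wide bump around `0`, minus narrow bumps around `0` and `T`. -/
lemma exists_multiplier {f : ℝ → ℂ} (hf : Integrable f) (hfm : Measurable f) {T : ℝ} (hT : 0 < T)
    (h0 : 𝓕 f 0 = 0) (hfT : 𝓕 f T = 0) {η : ℝ≥0∞} (hη : 0 < η) :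
    ∃ m : 𝓢(ℝ, ℂ), HasCompactSupport m ∧ ∃ r > 0, (∀ ξ, |ξ| < r → m ξ = 0) ∧
      (∀ ξ, |ξ - T| < r → m ξ = 0) ∧
      ∫⁻ x, ‖(∫ y, f y * (𝓕⁻ m : 𝓢(ℝ, ℂ)) (x - y)) - f x‖ₑ < η := by
  obtain ⟨κ, hκ1, hκ0, -⟩ := exists_bump
  set K : 𝓢(ℝ, ℂ) := 𝓕⁻ κ with hKdef
  have hK1 : ∫ y, K y = 1 := by
    have h : (𝓕 K : 𝓢(ℝ, ℂ)) 0 = 1 := by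
      rw [hKdef, FourierTransform.fourier_fourierInv_eq]
      exact hκ1 0 (by simp)
    rw [← h, SchwartzMap.fourier_coe, Real.fourier_real_eq]
    simp
  have L1 := tendsto_approximate_identity hf K.integrable hfm K.continuous.measurable hK1
  have L2 := tendsto_low_frequency hf K.integrable hfm K.continuous.measurable h0
  have L3 := tendsto_low_frequency hf K.integrable hfm K.continuous.measurable hfT
  have L := (L1.add L2).add L3
  simp only [add_zero] at L
  have hsm : ∀ᶠ s : ℝ in 𝓝[>] 0, s < min (min 1 (T / 3)) (1 / (T + 1)) :=
    mem_nhdsWithin_of_mem_nhds (Iio_mem_nhds (by positivity))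
  obtain ⟨s, ⟨hs, hlt⟩, hsm⟩ :=
    ((eventually_mem_nhdsWithin.and (L.eventually (gt_mem_nhds hη))).and hsm).exists
  have hs : 0 < s := hs
  simp only [lt_min_iff, lt_div_iff₀ (show (0 : ℝ) < 3 by norm_num),
    lt_div_iff₀ (show 0 < T + 1 by linarith)] at hsm
  obtain ⟨⟨hs1, hs3⟩, hsT⟩ := hsm
  -- Near `0` the bumps take the values `1, 1, 0`, near `T` the values `1, 0, 1`: this needs
  -- `s < 1`, `3 s < T` and `s (T + 1) < 1`.
  obtain ⟨m₁, hc₁, hm₁⟩ := exists_dilate κ hκ0 hs 0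
  obtain ⟨m₂, hc₂, hm₂⟩ := exists_dilate κ hκ0 (inv_pos.2 hs) 0
  obtain ⟨m₃, hc₃, hm₃⟩ := exists_dilate κ hκ0 (inv_pos.2 hs) T
  have low : ∀ z, |z| < s → |s⁻¹ * z| ≤ 1 := fun z hz => by
    rw [abs_mul, abs_of_pos (inv_pos.2 hs), inv_mul_le_iff₀ hs]; linarith
  have high : ∀ z, 2 * s ≤ |z| → 2 ≤ |s⁻¹ * z| := fun z hz => by
    rw [abs_mul, abs_of_pos (inv_pos.2 hs), le_inv_mul_iff₀ hs]; linarith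
  have wide : ∀ z, |z| ≤ T + s → |s * z| ≤ 1 := fun z hz => by
    rw [abs_mul, abs_of_pos hs]
    nlinarith
  refine ⟨m₁ - m₂ - m₃, ?_, s, hs, fun ξ hξ => ?_, fun ξ hξ => ?_, ?_⟩
  · have := (hc₁.add hc₂.neg).add hc₃.neg
    have e : ⇑(m₁ - m₂ - m₃) = ⇑m₁ + -⇑m₂ + -⇑m₃ := by
      funext ξ; simp [sub_eq_add_neg]
    rwa [e]
  · simp only [sub_apply, hm₁, hm₂, hm₃, sub_zero]
    rw [hκ1 _ (wide _ (by linarith)), hκ1 _ (low _ hξ), hκ0 _ (high _ ?_)]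
    · ring
    · rw [abs_lt] at hξ
      rw [abs_of_neg] <;> linarith
  · simp only [sub_apply, hm₁, hm₂, hm₃, sub_zero]
    rw [abs_lt] at hξ
    rw [hκ1 _ (wide _ (abs_le.2 ⟨by linarith, by linarith⟩)),
      hκ1 _ (low _ (abs_lt.2 hξ)), hκ0 _ (high _ ?_)]
    · ring
    · rw [abs_of_pos] <;> linarith
  · have hinv : ∀ (m : 𝓢(ℝ, ℂ)) (a b : ℝ), 0 < a → (∀ ξ, m ξ = κ (a * (ξ - b))) → ∀ z,
        (𝓕⁻ m : 𝓢(ℝ, ℂ)) z =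
          cexp (2 * Real.pi * I * b * z) * ((a⁻¹ : ℝ) * K (a⁻¹ * z)) := by
      intro m a b ha hm z
      rw [SchwartzMap.fourierInv_coe, funext hm, fourierInv_dilate _ ha, hKdef,
        SchwartzMap.fourierInv_coe]
    have e1 := hinv m₁ _ _ hs hm₁
    have e2 := hinv m₂ _ _ (inv_pos.2 hs) hm₂
    have e3 := hinv m₃ _ _ (inv_pos.2 hs) hm₃
    simp only [inv_inv] at e2 e3
    simp only [Complex.ofReal_zero, mul_zero, zero_mul, Complex.exp_zero, one_mul] at e1
    have hA : Measurable (fun x => ‖(∫ y, f y * (𝓕⁻ m₁ : 𝓢(ℝ, ℂ)) (x - y)) - f x‖ₑ) :=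
      ((measurable_convolution hfm (SchwartzMap.continuous _).measurable).sub hfm).enorm
    have hB : Measurable (fun x => ‖∫ y, f y * (𝓕⁻ m₂ : 𝓢(ℝ, ℂ)) (x - y)‖ₑ) :=
      (measurable_convolution hfm (SchwartzMap.continuous _).measurable).enorm
    simp only [← e1, ← e2, ← e3] at hlt
    refine lt_of_le_of_lt ?_ hlt
    have hAB : Measurable (fun x => ‖(∫ y, f y * (𝓕⁻ m₁ : 𝓢(ℝ, ℂ)) (x - y)) - f x‖ₑ +
        ‖∫ y, f y * (𝓕⁻ m₂ : 𝓢(ℝ, ℂ)) (x - y)‖ₑ) := hA.add hB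
    rw [← lintegral_add_left hA, ← lintegral_add_left hAB]
    refine lintegral_mono fun x => ?_
    have i₁ := integrable_mul_schwartz_sub hf (𝓕⁻ m₁) x
    have i₂ := integrable_mul_schwartz_sub hf (𝓕⁻ m₂) x
    have i₃ := integrable_mul_schwartz_sub hf (𝓕⁻ m₃) x
    have : (∫ y, f y * (𝓕⁻ (m₁ - m₂ - m₃) : 𝓢(ℝ, ℂ)) (x - y)) - f x =
        (∫ y, f y * (𝓕⁻ m₁ : 𝓢(ℝ, ℂ)) (x - y)) - f x - (∫ y, f y * (𝓕⁻ m₂ : 𝓢(ℝ, ℂ)) (x - y))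
          - (∫ y, f y * (𝓕⁻ m₃ : 𝓢(ℝ, ℂ)) (x - y)) := by
      have e : ∀ z, (𝓕⁻ (m₁ - m₂ - m₃) : 𝓢(ℝ, ℂ)) z =
          (𝓕⁻ m₁ : 𝓢(ℝ, ℂ)) z - (𝓕⁻ m₂ : 𝓢(ℝ, ℂ)) z - (𝓕⁻ m₃ : 𝓢(ℝ, ℂ)) z := fun z => by
        rw [sub_eq_add_neg, sub_eq_add_neg, FourierTransform.fourierInv_add,
          FourierTransform.fourierInv_add, FourierTransform.fourierInv_neg,
          FourierTransform.fourierInv_neg, ← sub_eq_add_neg, ← sub_eq_add_neg]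
        rfl
      simp only [e, mul_sub]
      have i₁₂ : Integrable (fun y => f y * (𝓕⁻ m₁ : 𝓢(ℝ, ℂ)) (x - y) -
          f y * (𝓕⁻ m₂ : 𝓢(ℝ, ℂ)) (x - y)) := i₁.sub i₂
      rw [integral_sub i₁₂ i₃, integral_sub i₁ i₂]
      ring
    rw [this]
    exact enorm_sub_le.trans (add_le_add_left enorm_sub_le _)

/-! ### Cutoff with compactly supported Fourier transform -/

/-- Multiplying `f` by a function whose Fourier transform is supported in `[-2s, 2s]` enlarges the
frequency support by at most `2s`. -/
lemma fourier_mul_cutoff {f : ℝ → ℂ} (hf : Integrable f) (hneg : ∀ ξ < 0, 𝓕 f ξ = 0)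
    (κ : 𝓢(ℝ, ℂ)) (hκ : ∀ ξ, 2 ≤ |ξ| → κ ξ = 0) {s : ℝ} (hs : 0 < s) (c : ℂ) {ξ : ℝ}
    (hξ : ξ < -(2 * s)) :
    𝓕 (fun x => f x * (c * (𝓕⁻ κ : 𝓢(ℝ, ℂ)) (s * x))) ξ = 0 := by
  obtain ⟨m, -, hm⟩ := exists_dilate κ hκ (inv_pos.2 hs) (-ξ)
  have hinv : ∀ x, (𝓕⁻ m : 𝓢(ℝ, ℂ)) x =
      cexp (2 * Real.pi * I * (-ξ : ℝ) * x) * (s * (𝓕⁻ κ : 𝓢(ℝ, ℂ)) (s * x)) := fun x => by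
    rw [SchwartzMap.fourierInv_coe, funext hm, fourierInv_dilate _ (inv_pos.2 hs), inv_inv,
      SchwartzMap.fourierInv_coe]
  -- `𝓕 (f ψ)(ξ)` is the pairing of `𝓕 f` with a bump of radius `2s` around `ξ`, hence zero.
  have key := fourierInv_fourier_mul hf m.integrable.comp_neg 0
  have hneg' : ∀ η, 𝓕 f η * m (-η) = 0 := fun η => by
    rcases lt_or_ge η 0 with h | h
    · rw [hneg η h, zero_mul]
    · rw [hm, hκ, mul_zero]
      rw [abs_mul, abs_of_pos (inv_pos.2 hs), le_inv_mul_iff₀ hs, abs_of_neg (by linarith)]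
      linarith
  have hrefl : ∀ y, 𝓕⁻ (fun η => m (-η)) (0 - y) = (𝓕⁻ m : 𝓢(ℝ, ℂ)) y := fun y => by
    rw [zero_sub, Real.fourierInv_eq_fourier_neg, neg_neg, SchwartzMap.fourierInv_coe,
      Real.fourierInv_eq_fourier_comp_neg]
  have hz : 𝓕⁻ (fun _ : ℝ => (0 : ℂ)) 0 = 0 := by simp [Real.fourierInv_eq]
  simp only [hneg', hrefl, hinv] at key
  rw [hz] at key
  have hs' : (s : ℂ) ≠ 0 := by exact_mod_cast hs.ne'
  refine (mul_eq_zero.1 (?_ : (s : ℂ) * _ = 0)).resolve_left hs'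
  rw [← mul_zero c, key, Real.fourier_real_eq_integral_exp_smul, ← integral_const_mul,
    ← integral_const_mul]
  congr 1; ext y
  have : cexp (2 * Real.pi * I * (-ξ : ℝ) * y) = cexp (↑(-2 * Real.pi * y * ξ) * I) := by
    congr 1; push_cast; ring
  rw [this, smul_eq_mul]; ring

lemma tendsto_cutoff {f : ℝ → ℂ} (hf : Integrable f) (ψ : 𝓢(ℝ, ℂ)) {c : ℂ} (hc : c * ψ 0 = 1) :
    Tendsto (fun s : ℝ => ∫⁻ x, ‖f x - f x * (c * ψ (s * x))‖ₑ) (𝓝 0) (𝓝 0) := by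
  have key : Tendsto (fun s : ℝ => ∫⁻ x, ‖f x - f x * (c * ψ (s * x))‖ₑ) (𝓝 0)
      (𝓝 (∫⁻ _ : ℝ, 0)) := by
    have hψ : ∀ s : ℝ, Continuous fun x => c * ψ (s * x) := fun s =>
      continuous_const.mul (ψ.continuous.comp (by fun_prop))
    refine tendsto_lintegral_filter_of_dominated_convergence'
      (fun x => ‖f x‖ₑ + ‖f x‖ₑ * ENNReal.ofReal (‖c‖ * SchwartzMap.seminorm ℝ 0 0 ψ))
      (.of_forall fun s => ?_) (.of_forall fun s => .of_forall fun x => ?_) ?_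
      (.of_forall fun x => ?_)
    · exact (hf.1.sub (hf.1.mul (hψ s).aestronglyMeasurable)).enorm
    · refine enorm_sub_le.trans ?_
      rw [enorm_mul]
      gcongr
      rw [← ofReal_norm, norm_mul]
      gcongr
      exact SchwartzMap.norm_le_seminorm ℝ ψ _
    · rw [lintegral_add_left' hf.1.enorm, lintegral_mul_const'' _ hf.1.enorm]
      exact ENNReal.add_ne_top.2 ⟨hf.2.ne, ENNReal.mul_ne_top hf.2.ne ENNReal.ofReal_ne_top⟩
    · have : Continuous fun s : ℝ => ‖f x - f x * (c * ψ (s * x))‖ₑ :=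
        (continuous_const.sub (continuous_const.mul (continuous_const.mul
          (ψ.continuous.comp (by fun_prop))))).enorm
      simpa [hc] using this.tendsto 0
  simpa using key

lemma integrable_pow_mul_cutoff {f : ℝ → ℂ} (hf : Integrable f) (ψ : 𝓢(ℝ, ℂ)) (c : ℂ) {s : ℝ}
    (hs : 0 < s) (n : ℕ) :
    Integrable (fun x => ‖x‖ ^ n * ‖f x * (c * ψ (s * x))‖) := by
  obtain ⟨C, hC⟩ := ψ.decay n 0
  have hψ : Continuous fun x : ℝ => ‖x‖ ^ n * ‖c * ψ (s * x)‖ :=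
    (by fun_prop : Continuous fun x : ℝ => ‖x‖ ^ n).mul
      (continuous_const.mul (ψ.continuous.comp (by fun_prop))).norm
  have := hf.norm.mul_bdd (c := ‖c‖ * ((s ^ n)⁻¹ * C)) hψ.aestronglyMeasurable
    (.of_forall fun x => ?_)
  · refine this.congr (.of_forall fun x => ?_)
    simp only [norm_mul]; ring
  · have h := hC.2 (s * x)
    rw [norm_iteratedFDeriv_zero, norm_mul, mul_pow, Real.norm_of_nonneg hs.le] at h
    rw [Real.norm_of_nonneg (by positivity), norm_mul, mul_left_comm]
    refine mul_le_mul_of_nonneg_left ?_ (norm_nonneg c)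
    rw [le_inv_mul_iff₀ (by positivity)]
    linarith

/-! ### Moments and the approximating Schwartz function -/

/-- The moments of `φ` against `x ^ k e^{-2πibx}` are, up to constants, the derivatives of `𝓕 φ` at
`b`, so they vanish when `𝓕 φ` vanishes near `b`. -/
lemma moment_eq_zero {φ : 𝓢(ℝ, ℂ)} {b : ℝ} (h : (𝓕 (φ : ℝ → ℂ)) =ᶠ[𝓝 b] 0) (k : ℕ) :
    ∫ x, φ x * (x : ℂ) ^ k * cexp (-I * (2 * Real.pi * b : ℝ) * x) = 0 := by
  have hd := Real.iteratedDeriv_fourier (f := φ) (N := ⊤) (n := k)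
    (fun n _ => by
      have := φ.integrable_pow_mul volume n
      refine (integrable_norm_iff ?_).1 (this.congr (.of_forall fun x => ?_))
      · exact ((by fun_prop : Continuous fun x : ℝ => x ^ n).smul
          φ.continuous).aestronglyMeasurable
      · simp) le_top
  have h0 : iteratedDeriv k (𝓕 (φ : ℝ → ℂ)) b = 0 := by
    rw [h.iteratedDeriv_eq k]; simp
  rw [hd, Real.fourier_real_eq_integral_exp_smul] at h0
  have hne : ((-2 * Real.pi * I : ℂ)) ^ k ≠ 0 := by
    apply pow_ne_zero
    have : (Real.pi : ℂ) ≠ 0 := by exact_mod_cast Real.pi_ne_zero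
    simp [this]
  refine (mul_eq_zero.1 (?_ : (-2 * Real.pi * I : ℂ) ^ k * _ = 0)).resolve_left hne
  rw [← h0, ← integral_const_mul]
  congr 1; ext x
  rw [smul_eq_mul, smul_eq_mul, mul_pow _ (x : ℂ)]
  have : cexp (-I * (2 * Real.pi * b : ℝ) * x) = cexp (↑(-2 * Real.pi * x * b) * I) := by
    congr 1; push_cast; ring
  rw [this]; ring

/-- The approximation in the normalisation of `𝓕`. The cutoff leaks frequencies only into
`[-2s, 0]`, where the multiplier vanishes as soon as `2s < r`. -/
lemma exists_approx {f : ℝ → ℂ} (hf : Integrable f) (hfm : Measurable f)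
    (hneg : ∀ ξ < 0, 𝓕 f ξ = 0) {T : ℝ} (hT : 0 < T)
    (h0 : 𝓕 f 0 = 0) (hfT : 𝓕 f T = 0) {η : ℝ≥0∞} (hη : 0 < η) :
    ∃ φ : 𝓢(ℝ, ℂ), ∃ r > 0, (∀ ξ < r, 𝓕 (φ : ℝ → ℂ) ξ = 0) ∧
      (∀ ξ, |ξ - T| < r → 𝓕 (φ : ℝ → ℂ) ξ = 0) ∧ ∫⁻ x, ‖f x - φ x‖ₑ < η := by
  obtain ⟨m, hmc, r, hr, hm0, hmT, hlt⟩ := exists_multiplier hf hfm hT h0 hfT hη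
  obtain ⟨κ, -, hκ0, hκi⟩ := exists_bump
  set M : 𝓢(ℝ, ℂ) := 𝓕⁻ m with hM
  set ψ : 𝓢(ℝ, ℂ) := 𝓕⁻ κ with hψ
  have hψ0 : ψ 0 ≠ 0 := by
    rw [hψ, SchwartzMap.fourierInv_coe, Real.fourierInv_eq']
    simpa using hκi
  set c := (ψ 0)⁻¹
  have hc : c * ψ 0 = 1 := inv_mul_cancel₀ hψ0
  have hMn : ∫⁻ x, ‖M x‖ₑ ≠ ⊤ := M.integrable.2.ne
  have lim := (ENNReal.Tendsto.mul_const (tendsto_cutoff hf ψ hc) (Or.inr hMn)).const_add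
    (∫⁻ x, ‖(∫ y, f y * M (x - y)) - f x‖ₑ)
  rw [zero_mul, add_zero] at lim
  have hsr : ∀ᶠ s : ℝ in 𝓝[>] 0, s < r / 2 :=
    mem_nhdsWithin_of_mem_nhds (Iio_mem_nhds (by positivity))
  obtain ⟨s, ⟨hs, hsη⟩, hsr⟩ := ((eventually_mem_nhdsWithin.and
    ((lim.mono_left (nhdsWithin_le_nhds (s := Set.Ioi 0))).eventually
      (gt_mem_nhds hlt))).and hsr).exists
  have hs : 0 < s := hs
  set F : ℝ → ℂ := fun x => f x * (c * ψ (s * x)) with hF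
  have hFm : Measurable F :=
    hfm.mul (continuous_const.mul (ψ.continuous.comp (by fun_prop))).measurable
  have hFi : Integrable F := by
    refine (integrable_norm_iff hFm.aestronglyMeasurable).1 ?_
    simpa [hF] using integrable_pow_mul_cutoff hf ψ c hs 0
  -- All moments of `F` converge, because of the cutoff.
  have hFs : ContDiff ℝ ∞ (𝓕 F) :=
    Real.contDiff_fourier fun n _ => integrable_pow_mul_cutoff hf ψ c hs n
  have hPc : HasCompactSupport (fun ξ => 𝓕 F ξ * m ξ) := hmc.mul_left
  set P : 𝓢(ℝ, ℂ) := hPc.toSchwartzMap (hFs.mul (m.smooth ⊤)) with hP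
  have hPapp : ∀ ξ, P ξ = 𝓕 F ξ * m ξ := fun ξ => rfl
  have hφ : ∀ x, (𝓕⁻ P : 𝓢(ℝ, ℂ)) x = ∫ y, F y * M (x - y) := fun x => by
    rw [SchwartzMap.fourierInv_coe, funext hPapp, fourierInv_fourier_mul hFi m.integrable, hM,
      SchwartzMap.fourierInv_coe]
  have hFφ : ∀ ξ, 𝓕 ((𝓕⁻ P : 𝓢(ℝ, ℂ)) : ℝ → ℂ) ξ = 𝓕 F ξ * m ξ := fun ξ => by
    rw [← SchwartzMap.fourier_coe, FourierTransform.fourier_fourierInv_eq, hPapp]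
  refine ⟨𝓕⁻ P, r, hr, fun ξ hξ => ?_, fun ξ hξ => ?_, ?_⟩
  · rw [hFφ]
    by_cases h : ξ < -(2 * s)
    · rw [hF, fourier_mul_cutoff hf hneg κ hκ0 hs c h, zero_mul]
    · rw [hm0 ξ (abs_lt.2 ⟨by linarith, hξ⟩), mul_zero]
  · rw [hFφ, hmT ξ hξ, mul_zero]
  · refine lt_of_le_of_lt ?_ hsη
    have hmeas : Measurable fun x => ‖(∫ y, f y * M (x - y)) - f x‖ₑ :=
      ((measurable_convolution hfm M.continuous.measurable).sub hfm).enorm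
    refine le_trans ?_ (add_le_add_right
      (lintegral_convolution_le (hfm.sub hFm) M.continuous.measurable) _)
    rw [← lintegral_add_left hmeas]
    refine lintegral_mono fun x => ?_
    have : f x - (𝓕⁻ P : 𝓢(ℝ, ℂ)) x =
        (∫ y, (f - F) y * M (x - y)) - ((∫ y, f y * M (x - y)) - f x) := by
      rw [hφ]
      simp only [Pi.sub_apply, sub_mul]
      rw [integral_sub (integrable_mul_schwartz_sub hf M x) (integrable_mul_schwartz_sub hFi M x)]
      ring
    rw [this, add_comm]
    exact enorm_sub_le

theorem schwartz_S0tau_dense_in_H1_tau (τ : ℝ) (hτ : 0 < τ) :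
    ∀ f : ℝ → ℂ, Integrable f → (∀ ξ : ℝ, ξ < 0 → FT f ξ = 0) → FT f τ = 0 →
      ∀ ε : ℝ, 0 < ε →
        ∃ φ : SchwartzMap ℝ ℂ,
          (∀ ξ : ℝ, ξ < 0 → FT (⇑φ) ξ = 0) ∧
          (∀ k : ℕ, (∫ x : ℝ, φ x * (x : ℂ) ^ k) = 0) ∧
          (∀ k : ℕ, (∫ x : ℝ, φ x * (x : ℂ) ^ k *
            Complex.exp (-Complex.I * τ * x)) = 0) ∧
          (∫ x : ℝ, ‖f x - φ x‖) < ε := by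
  intro f hf hneg hfτ ε hε
  have hpi : 0 < 2 * Real.pi := Real.two_pi_pos
  -- A Borel representative, to apply Tonelli freely.
  set g := hf.1.mk f with hg
  have hfg : f =ᵐ[volume] g := hf.1.ae_eq_mk
  have hgi : Integrable g := hf.congr hfg
  have hgf : ∀ ξ, 𝓕 g ξ = FT f (2 * Real.pi * ξ) := fun ξ => by
    rw [FT_eq_fourier, ← Real.fourier_congr_ae hfg, mul_div_cancel_left₀ _ hpi.ne']
  have hgneg : ∀ ξ < 0, 𝓕 g ξ = 0 := fun ξ hξ => by
    rw [hgf, hneg _ (mul_neg_of_pos_of_neg hpi hξ)]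
  have hcont : Continuous (𝓕 g) :=
    VectorFourier.fourierIntegral_continuous Real.continuous_fourierChar continuous_inner hgi
  -- Continuity of `𝓕 g` extends the vanishing from the negative half-line to `0`.
  have hg0 : 𝓕 g 0 = 0 := by
    have h1 : Tendsto (𝓕 g) (𝓝[<] 0) (𝓝 (𝓕 g 0)) := hcont.continuousAt.mono_left nhdsWithin_le_nhds
    refine tendsto_nhds_unique h1 (tendsto_const_nhds.congr' ?_)
    filter_upwards [self_mem_nhdsWithin] with ξ hξ using (hgneg ξ hξ).symm
  have hgT : 𝓕 g (τ / (2 * Real.pi)) = 0 := by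
    rw [hgf, mul_div_cancel₀ _ hpi.ne', hfτ]
  obtain ⟨φ, r, hr, hφ0, hφT, hlt⟩ := exists_approx hgi hf.1.stronglyMeasurable_mk.measurable
    hgneg (div_pos hτ hpi) hg0 hgT (ENNReal.ofReal_pos.2 hε)
  refine ⟨φ, fun ξ hξ => ?_, fun k => ?_, fun k => ?_, ?_⟩
  · rw [FT_eq_fourier, hφ0 _ ((div_neg_of_neg_of_pos hξ hpi).trans hr)]
  · have := moment_eq_zero (φ := φ) (b := 0)
      (by filter_upwards [Iio_mem_nhds hr] with ξ hξ using hφ0 ξ hξ) k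
    simpa using this
  · have := moment_eq_zero (φ := φ) (b := τ / (2 * Real.pi))
      (by filter_upwards [Metric.ball_mem_nhds _ hr] with ξ hξ using hφT ξ hξ) k
    rwa [mul_div_cancel₀ _ hpi.ne'] at this
  · have hmeas : AEStronglyMeasurable (fun x => f x - φ x) :=
      hf.1.sub φ.continuous.aestronglyMeasurable
    rw [integral_norm_eq_lintegral_enorm hmeas]
    refine ENNReal.toReal_lt_of_lt_ofReal (lt_of_eq_of_lt (lintegral_congr_ae ?_) hlt)
    filter_upwards [hfg] with x hx
    rw [hx]
end

section
/- Let K ∈ L¹(ℝ,ℂ) and for ε > 0 define K_ε(x) := ε·K(εx). If f ∈ L¹(ℝ,ℂ) satisfies ∫_ℝ f(x) dx = 0, then the convolutions K_ε ∗ f tend to 0 in L¹: lim_{ε→0⁺} ‖K_ε ∗ f‖_{L¹} = 0. -/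
/-!
Put `ω t = ∫ ‖K (u - t) - K u‖ du`, the `L¹` modulus of continuity of `K`. It is bounded by
`2 ‖K‖₁`, and it is continuous with `ω 0 = 0` because translations act continuously on `L¹`
(`continuous_l1Modulus`). The substitution `x = u / ε` turns the norm of the convolution into
`∫ ‖∫ K (u - ε y) f y dy‖ du`; since `f` has vanishing integral, `K (u - ε y)` may be replaced by
`K (u - ε y) - K u`, and Fubini bounds the result by `∫ ω (ε y) ‖f y‖ dy`
(`norm_dilated_convolution_le`). The latter tends to `0` by dominated convergence.
-/

open MeasureTheory Complex Filter

/-- The `L¹` modulus of continuity `t ↦ ‖K(· - t) - K‖₁`. -/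
noncomputable def l1Modulus (K : ℝ → ℂ) (t : ℝ) : ℝ := ∫ u : ℝ, ‖K (u - t) - K u‖

lemma l1Modulus_nonneg (K : ℝ → ℂ) (t : ℝ) : 0 ≤ l1Modulus K t :=
  integral_nonneg fun _ => norm_nonneg _

lemma l1Modulus_le {K : ℝ → ℂ} (hK : Integrable K) (t : ℝ) :
    l1Modulus K t ≤ 2 * ∫ u : ℝ, ‖K u‖ := by
  have h1 : Integrable fun u => K (u - t) := hK.comp_sub_right t
  calc l1Modulus K t ≤ ∫ u : ℝ, (‖K (u - t)‖ + ‖K u‖) :=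
        integral_mono (h1.sub hK).norm (h1.norm.add hK.norm) fun u => norm_sub_le _ _
    _ = 2 * ∫ u : ℝ, ‖K u‖ := by
        rw [integral_add h1.norm hK.norm, integral_sub_right_eq_self (fun u => ‖K u‖) t]
        ring

lemma continuous_l1Modulus {K : ℝ → ℂ} (hK : Integrable K) : Continuous (l1Modulus K) := by
  let g : C(ℝ, C(ℝ, ℝ)) :=
    (ContinuousMap.mk (fun p : ℝ × ℝ => p.2 - p.1) (by fun_prop)).curry
  have hg : ∀ t, MeasurePreserving (g t) volume volume := fun t =>
    measurePreserving_sub_right volume t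
  have hmem : MemLp K 1 volume := memLp_one_iff_integrable.2 hK
  have hcont : Continuous fun t =>
      Lp.compMeasurePreserving (g t) (hg t) (hmem.toLp K) :=
    continuous_const.compMeasurePreservingLp g.continuous hg ENNReal.one_ne_top
  have heq : l1Modulus K = fun t =>
      ‖Lp.compMeasurePreserving (g t) (hg t) (hmem.toLp K) - hmem.toLp K‖ := by
    funext t
    have h1 : Integrable fun u => K (u - t) := hK.comp_sub_right t
    exact (L1.norm_of_fun_eq_integral_norm (h1.sub hK)).symm
  rw [heq]
  exact (hcont.sub continuous_const).norm

/-- Integrability on the plane of the convolution integrand after the substitution `x = u / ε`: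
it is a tensor product composed with the measure-preserving shear `(y, u) ↦ (y, u - ε y)`. -/
lemma integrable_shear {K f : ℝ → ℂ} (hK : Integrable K) (hf : Integrable f) (ε : ℝ) :
    Integrable (fun p : ℝ × ℝ => f p.1 * K (p.2 - ε * p.1)) (volume.prod volume) := by
  have hmp : MeasurePreserving (fun p : ℝ × ℝ => (p.1, p.2 - ε * p.1))
      (volume.prod volume) (volume.prod volume) :=
    (MeasurePreserving.id volume).skew_product (g := fun y u => u - ε * y)
      (by fun_prop) (ae_of_all _ fun y => (measurePreserving_sub_right volume (ε * y)).map_eq)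
  exact hmp.integrable_comp_of_integrable (hf.mul_prod hK)

lemma norm_dilated_convolution_le {K f : ℝ → ℂ} (hK : Integrable K) (hf : Integrable f)
    (hf0 : (∫ x : ℝ, f x) = 0) {ε : ℝ} (hε : 0 < ε) :
    (∫ x : ℝ, ‖∫ y : ℝ, (ε : ℂ) * K (ε * (x - y)) * f y‖) ≤
      ∫ y : ℝ, ‖f y‖ * l1Modulus K (ε * y) := by
  have hshear := integrable_shear hK hf ε
  have hdiff : Integrable (fun p : ℝ × ℝ => f p.1 * (K (p.2 - ε * p.1) - K p.2))
      (volume.prod volume) := by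
    simp only [mul_sub]
    exact hshear.sub (hf.mul_prod hK)
  have hsub : (∫ x : ℝ, ‖∫ y : ℝ, (ε : ℂ) * K (ε * (x - y)) * f y‖) =
      ∫ u : ℝ, ‖∫ y : ℝ, f y * K (u - ε * y)‖ := by
    have h := Measure.integral_comp_mul_left (fun u : ℝ => ‖∫ y : ℝ, f y * K (u - ε * y)‖) ε
    rw [abs_of_pos (inv_pos.2 hε), smul_eq_mul, eq_inv_mul_iff_mul_eq₀ hε.ne',
      ← integral_const_mul] at h
    rw [← h]
    congr 1 with x
    have : ∀ y, (ε : ℂ) * K (ε * (x - y)) * f y = ε * (f y * K (ε * x - ε * y)) := fun y => by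
      rw [mul_sub]; ring
    simp_rw [this]
    rw [integral_const_mul, norm_mul, Complex.norm_real, Real.norm_of_nonneg hε.le]
  have hcancel : (∫ u : ℝ, ‖∫ y : ℝ, f y * K (u - ε * y)‖) =
      ∫ u : ℝ, ‖∫ y : ℝ, f y * (K (u - ε * y) - K u)‖ := by
    refine integral_congr_ae ?_
    filter_upwards [hshear.prod_left_ae] with u hu
    simp_rw [mul_sub]
    rw [integral_sub hu (hf.mul_const _), integral_mul_const, hf0, zero_mul, sub_zero]
  rw [hsub, hcancel]
  calc (∫ u : ℝ, ‖∫ y : ℝ, f y * (K (u - ε * y) - K u)‖)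
      ≤ ∫ u : ℝ, ∫ y : ℝ, ‖f y * (K (u - ε * y) - K u)‖ :=
        integral_mono hdiff.integral_prod_right.norm hdiff.norm.integral_prod_right
          fun u => norm_integral_le_integral_norm _
    _ = ∫ y : ℝ, ∫ u : ℝ, ‖f y * (K (u - ε * y) - K u)‖ :=
        (integral_integral_swap hdiff.norm).symm
    _ = ∫ y : ℝ, ‖f y‖ * l1Modulus K (ε * y) := by
        simp_rw [norm_mul, integral_const_mul, l1Modulus]

/-- **Approximate-identity-type convergence:** if `K ∈ L¹(ℝ)`, `K_ε(x) := ε K(εx)`, and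
`f ∈ L¹(ℝ)` has vanishing integral, then `‖K_ε ∗ f‖₁ → 0` as `ε → 0⁺`. -/
theorem dilated_convolution_tendsto_zero (K : ℝ → ℂ) (hK : Integrable K)
    (f : ℝ → ℂ) (hf : Integrable f) (hf0 : (∫ x : ℝ, f x) = 0) :
    Tendsto (fun ε : ℝ =>
        ∫ x : ℝ, ‖∫ y : ℝ, (ε : ℂ) * K (ε * (x - y)) * f y‖)
      (nhdsWithin (0 : ℝ) (Set.Ioi 0)) (nhds 0) := by
  have hω := continuous_l1Modulus hK
  have hlim : Tendsto (fun ε : ℝ => ∫ y : ℝ, ‖f y‖ * l1Modulus K (ε * y))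
      (nhdsWithin (0 : ℝ) (Set.Ioi 0)) (nhds (∫ _ : ℝ, (0 : ℝ))) := by
    refine tendsto_integral_filter_of_dominated_convergence
      (fun y => ‖f y‖ * (2 * ∫ u : ℝ, ‖K u‖)) (Eventually.of_forall fun ε => ?_)
      (Eventually.of_forall fun ε => ae_of_all _ fun y => ?_) (hf.norm.mul_const _)
      (ae_of_all _ fun y => ?_)
    · exact hf.1.norm.mul (hω.comp (continuous_const_mul ε)).aestronglyMeasurable
    · rw [Real.norm_of_nonneg (mul_nonneg (norm_nonneg _) (l1Modulus_nonneg _ _))]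
      exact mul_le_mul_of_nonneg_left (l1Modulus_le hK _) (norm_nonneg _)
    · have hc : Continuous fun ε : ℝ => ‖f y‖ * l1Modulus K (ε * y) :=
        continuous_const.mul (hω.comp (continuous_mul_const y))
      have h0 : ‖f y‖ * l1Modulus K (0 * y) = 0 := by simp [l1Modulus]
      simpa only [h0] using (hc.tendsto 0).mono_left nhdsWithin_le_nhds
  rw [integral_zero] at hlim
  refine tendsto_of_tendsto_of_tendsto_of_le_of_le' tendsto_const_nhds hlim
    (Eventually.of_forall fun ε => integral_nonneg fun _ => norm_nonneg _) ?_
  filter_upwards [self_mem_nhdsWithin] with ε hε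
  exact norm_dilated_convolution_le hK hf hf0 hε
end
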